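/- arXiv:math/0411312 — 2 statements merged into one kernel-verified Lean document; each statement's English description precedes it below -/
import Mathlib

section
/- Let T₁, T₂, T₃ be unit vectors in ℝ³ making equal pairwise angles, with common spherical circumradius β ∈ [0, π/2] (the spherical distance from each Tℓ to the closer center N). Then tc := sup_e Σℓ(π/2 − d_{S²}(e,Tℓ)) equals 3(π/2 − β) if β ≤ R₀, and equals 3π/2 − 4·arcsin((√3/2)·sin β) if β ≥ R₀, where R₀ is the unique value in (0, π/2) at which 3β = 4·arcsin((√3/2)·sin β). -/
open Real RealInnerProductSpace

/-- The vertex total-curvature contribution of three unit vectors in `ℝ³`. -/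
noncomputable def tcVertex3 (T : Fin 3 → EuclideanSpace ℝ (Fin 3)) : ℝ :=
  sSup {s : ℝ | ∃ e : EuclideanSpace ℝ (Fin 3), ‖e‖ = 1 ∧
    s = ∑ ℓ, (π / 2 - Real.arccos ⟪T ℓ, e⟫)}


/-- Tangent line inequality for `1/√(1-x²)`. -/
lemma tcv_tangent (x y : ℝ) (hx : x ^ 2 < 1) (hy : y ^ 2 < 1) :
    1 / √(1 - y ^ 2) + (x - y) * (y / √(1 - y ^ 2) ^ 3) ≤ 1 / √(1 - x ^ 2) := by
  have hS : 0 < √(1 - x ^ 2) := Real.sqrt_pos.2 (by linarith)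
  have hC : 0 < √(1 - y ^ 2) := Real.sqrt_pos.2 (by linarith)
  have hS2 : √(1 - x ^ 2) ^ 2 = 1 - x ^ 2 := Real.sq_sqrt (by linarith)
  have hC2 : √(1 - y ^ 2) ^ 2 = 1 - y ^ 2 := Real.sq_sqrt (by linarith)
  generalize √(1 - x ^ 2) = S at *
  generalize √(1 - y ^ 2) = C at *
  have h1 : x * y ≤ 1 - S * C := by nlinarith [sq_nonneg (x - y), sq_nonneg (S - C)]
  have h2 : 1 / C + (x - y) * (y / C ^ 3) = (2 * C ^ 2 - 1 + x * y) / C ^ 3 := by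
    field_simp
    nlinarith
  rw [h2, div_le_div_iff₀ (by positivity) hS]
  have h3 : (2 * C ^ 2 - 1 + x * y) * S ≤ (2 * C ^ 2 - S * C) * S :=
    mul_le_mul_of_nonneg_right (by linarith) hS.le
  nlinarith [mul_nonneg hC.le (sq_nonneg (C - S))]

/-- Convexity of `1/√(1-x²)` in three point form. -/
lemma tcv_convex (x y z : ℝ) (hx : x ^ 2 < 1) (hy : y ^ 2 < 1) (hz : z ^ 2 < 1)
    (hxy : x ≤ y) (hyz : y ≤ z) :
    0 ≤ (y - x) * (1 / √(1 - z ^ 2)) + (z - y) * (1 / √(1 - x ^ 2))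
      - (z - x) * (1 / √(1 - y ^ 2)) := by
  have h1 := mul_le_mul_of_nonneg_left (tcv_tangent z y hz hy) (sub_nonneg.2 hxy)
  have h2 := mul_le_mul_of_nonneg_left (tcv_tangent x y hx hy) (sub_nonneg.2 hyz)
  nlinarith

/-- The sum on a circle of latitude. -/
noncomputable def tcvH (A B φ : ℝ) : ℝ :=
  arcsin (A + B * cos φ) + arcsin (A + B * cos (φ + 2 * π / 3))
    + arcsin (A + B * cos (φ - 2 * π / 3))

lemma tcv_cos23 : cos (2 * π / 3) = -1 / 2 := by
  rw [show 2 * π / 3 = π - π / 3 by ring, cos_pi_sub, cos_pi_div_three]; ring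

lemma tcv_sin23 : sin (2 * π / 3) = √3 / 2 := by
  rw [show 2 * π / 3 = π - π / 3 by ring, sin_pi_sub, sin_pi_div_three]

lemma tcv_hasDeriv (A B a φ : ℝ) (h : (A + B * cos (φ + a)) ^ 2 < 1) :
    HasDerivAt (fun φ => arcsin (A + B * cos (φ + a)))
      (1 / √(1 - (A + B * cos (φ + a)) ^ 2) * (B * (-sin (φ + a)))) φ := by
  have h1 : HasDerivAt (fun φ => A + B * cos (φ + a)) (B * (-sin (φ + a))) φ := by
    have h0 : HasDerivAt (fun φ => φ + a) 1 φ := (hasDerivAt_id φ).add_const a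
    have := ((h0.cos).const_mul B).const_add A
    simpa using this
  have h2 := abs_lt.1 ((sq_lt_one_iff_abs_lt_one _).1 h)
  exact (Real.hasDerivAt_arcsin h2.1.ne' h2.2.ne).comp φ h1

lemma tcv_sq_lt (A B t : ℝ) (hA : 0 ≤ A) (hB : 0 < B) (hAB : A + B ≤ 1)
    (h1 : -1 < t) (h2 : t < 1) : (A + B * t) ^ 2 < 1 := by
  rw [sq_lt_one_iff_abs_lt_one, abs_lt]
  constructor <;> nlinarith

lemma tcvH_antitone (A B : ℝ) (hA : 0 ≤ A) (hB : 0 < B) (hAB : A + B ≤ 1) :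
    AntitoneOn (tcvH A B) (Set.Icc 0 (π / 3)) := by
  have hpi := Real.pi_pos
  have hcont : Continuous (tcvH A B) := by
    unfold tcvH
    fun_prop
  have key : ∀ φ ∈ Set.Ioo 0 (π / 3), ∃ d, d ≤ 0 ∧ HasDerivAt (tcvH A B) d φ := by
    intro φ hφ
    obtain ⟨h0, h1⟩ := hφ
    have c0a : -1 < cos φ := by
      rw [← cos_pi]; exact cos_lt_cos_of_nonneg_of_le_pi h0.le le_rfl (by linarith)
    have c0b : cos φ < 1 := by
      rw [← cos_zero]; exact cos_lt_cos_of_nonneg_of_le_pi le_rfl (by linarith) h0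
    have c1a : -1 < cos (φ + 2 * π / 3) := by
      rw [← cos_pi]; exact cos_lt_cos_of_nonneg_of_le_pi (by linarith) le_rfl (by linarith)
    have e2 : cos (φ - 2 * π / 3) = cos (2 * π / 3 - φ) := by rw [← cos_neg]; ring_nf
    have c12 : cos (φ + 2 * π / 3) ≤ cos (φ - 2 * π / 3) := by
      rw [e2]; exact cos_le_cos_of_nonneg_of_le_pi (by linarith) (by linarith) (by linarith)
    have c20 : cos (φ - 2 * π / 3) ≤ cos φ := by
      rw [e2]; exact cos_le_cos_of_nonneg_of_le_pi (by linarith) (by linarith) (by linarith)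
    have q0 := tcv_sq_lt A B _ hA hB hAB c0a c0b
    have q1 := tcv_sq_lt A B _ hA hB hAB c1a (by linarith)
    have q2 := tcv_sq_lt A B _ hA hB hAB (by linarith : -1 < cos (φ - 2 * π / 3)) (by linarith)
    have d0 := tcv_hasDeriv A B 0 φ (by simpa using q0)
    have d1 := tcv_hasDeriv A B (2 * π / 3) φ q1
    have d2 := tcv_hasDeriv A B (-(2 * π / 3)) φ (by simpa [sub_eq_add_neg] using q2)
    simp only [add_zero, ← sub_eq_add_neg] at d0 d2
    refine ⟨_, ?_, (d0.add d1).add d2⟩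
    have hc := tcv_convex _ _ _ q1 q2 q0 (by nlinarith) (by nlinarith)
    have s0 : (A + B * cos (φ - 2 * π / 3)) - (A + B * cos (φ + 2 * π / 3)) = √3 * (B * sin φ) := by
      rw [cos_sub, cos_add, tcv_sin23]; ring
    have h3 : √3 * √3 = 3 := Real.mul_self_sqrt (by norm_num)
    have s1 : (A + B * cos φ) - (A + B * cos (φ - 2 * π / 3))
        = √3 * (B * sin (φ + 2 * π / 3)) := by
      rw [cos_sub, sin_add, tcv_sin23, tcv_cos23]; linear_combination (-B * cos φ / 2) * h3
    have s2 : (A + B * cos φ) - (A + B * cos (φ + 2 * π / 3))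
        = -(√3 * (B * sin (φ - 2 * π / 3))) := by
      rw [cos_add, sin_sub, tcv_sin23, tcv_cos23]; linear_combination (-B * cos φ / 2) * h3
    rw [s0, s1, s2] at hc
    have h3' : 0 < √3 := by positivity
    by_contra hcon
    push Not at hcon
    have := mul_pos h3' hcon
    nlinarith
  apply antitoneOn_of_deriv_nonpos (convex_Icc _ _) hcont.continuousOn
  · intro φ hφ
    rw [interior_Icc] at hφ
    obtain ⟨d, _, hd⟩ := key φ hφ
    exact hd.differentiableAt.differentiableWithinAt
  · intro φ hφ
    rw [interior_Icc] at hφ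
    obtain ⟨d, hd0, hd⟩ := key φ hφ
    rw [hd.deriv]; exact hd0

lemma tcvH_le (A B φ : ℝ) (hA : 0 ≤ A) (hB : 0 ≤ B) (hAB : A + B ≤ 1) :
    tcvH A B φ ≤ tcvH A B 0 := by
  have hpi := Real.pi_pos
  rcases hB.eq_or_lt with rfl | hB
  · simp [tcvH]
  have hper : Function.Periodic (tcvH A B) (2 * π / 3) := by
    intro x
    unfold tcvH
    rw [show x + 2 * π / 3 + 2 * π / 3 = x - 2 * π / 3 + 2 * π by ring, cos_add_two_pi,
      show x + 2 * π / 3 - 2 * π / 3 = x by ring]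
    ring
  have heven : ∀ x, tcvH A B (-x) = tcvH A B x := by
    intro x
    unfold tcvH
    rw [show -x + 2 * π / 3 = -(x - 2 * π / 3) by ring,
      show -x - 2 * π / 3 = -(x + 2 * π / 3) by ring, cos_neg, cos_neg, cos_neg]
    ring
  obtain ⟨y, hy, hyφ⟩ := hper.exists_mem_Ico₀ (by positivity) φ
  rw [hyφ]
  have hanti := tcvH_antitone A B hA hB hAB
  rcases le_total y (π / 3) with h | h
  · exact hanti ⟨le_rfl, by positivity⟩ ⟨hy.1, h⟩ hy.1
  · have : tcvH A B y = tcvH A B (2 * π / 3 - y) := by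
      rw [← heven y, ← hper (-y)]; congr 1; ring
    rw [this]
    exact hanti ⟨le_rfl, by positivity⟩ ⟨by linarith [hy.2], by linarith⟩ (by linarith [hy.2])

/-- The inner function along the great circle. -/
noncomputable def tcvq (β θ : ℝ) : ℝ := cos θ * cos β - sin θ * sin β / 2

lemma tcv_deriv1 (β θ : ℝ) (hs : 0 < sin β) :
    HasDerivAt (fun θ => θ + 2 * arcsin (tcvq β θ))
      (1 + 2 * (1 / √(1 - tcvq β θ ^ 2) * (-(sin θ * cos β + cos θ * sin β / 2)))) θ := by
  have h1 : HasDerivAt (tcvq β) (-(sin θ * cos β + cos θ * sin β / 2)) θ := by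
    have := ((Real.hasDerivAt_cos θ).mul_const (cos β)).sub
      (((Real.hasDerivAt_sin θ).mul_const (sin β)).div_const 2)
    refine this.congr_deriv ?_
    ring
  have hid : tcvq β θ ^ 2 + (sin θ * cos β + cos θ * sin β / 2) ^ 2 = 1 - 3 / 4 * sin β ^ 2 := by
    unfold tcvq
    have e1 := sin_sq_add_cos_sq θ
    have e2 := sin_sq_add_cos_sq β
    linear_combination (cos β ^ 2 + sin β ^ 2 / 4) * e1 + e2
  have h : tcvq β θ ^ 2 < 1 := by nlinarith [sq_nonneg (sin θ * cos β + cos θ * sin β / 2)]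
  have h2 := abs_lt.1 ((sq_lt_one_iff_abs_lt_one _).1 h)
  exact (hasDerivAt_id θ).add (((Real.hasDerivAt_arcsin h2.1.ne' h2.2.ne).comp θ h1).const_mul 2)

lemma tcv_sqrt_rel (β θ : ℝ) (hs : 0 < sin β) :
    0 < √(1 - tcvq β θ ^ 2) ∧ √(1 - tcvq β θ ^ 2) ^ 2 =
      4 * (sin θ * cos β + cos θ * sin β / 2) ^ 2
      + 3 * sin θ * (sin θ * (sin β ^ 2 / 4 - cos β ^ 2) - sin β * cos β * cos θ) := by
  have e1 := sin_sq_add_cos_sq θ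
  have e2 := sin_sq_add_cos_sq β
  have hid : 1 - tcvq β θ ^ 2 = (sin θ * cos β + cos θ * sin β / 2) ^ 2 + 3 / 4 * sin β ^ 2 := by
    unfold tcvq
    linear_combination -(cos β ^ 2 + sin β ^ 2 / 4) * e1 - e2
  have hp : 0 < 1 - tcvq β θ ^ 2 := by rw [hid]; positivity
  refine ⟨Real.sqrt_pos.2 hp, ?_⟩
  rw [Real.sq_sqrt hp.le, hid]
  linear_combination (-3 / 4 * sin β ^ 2) * e1

lemma tcv_phase1 (β θ : ℝ) (hβ : 0 < β) (hβ' : β ≤ π / 2) (h0 : 0 ≤ θ) (h1 : θ ≤ β) :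
    θ + 2 * arcsin (tcvq β θ) ≤ 0 + 2 * arcsin (tcvq β 0) ∨
    θ + 2 * arcsin (tcvq β θ) ≤ β + 2 * arcsin (tcvq β β) := by
  have hpi := Real.pi_pos
  have hs : 0 < sin β := sin_pos_of_pos_of_lt_pi hβ (by linarith)
  have hc : 0 ≤ cos β := cos_nonneg_of_neg_pi_div_two_le_of_le (by linarith) hβ'
  have hdiff : ∀ x, HasDerivAt _ _ x := fun x => tcv_deriv1 β x hs
  have hcont : Continuous (fun θ => θ + 2 * arcsin (tcvq β θ)) := by
    unfold tcvq
    fun_prop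
  have hmono : ∀ x y, 0 ≤ x → x ≤ y → y ≤ β →
      sin y * (sin β ^ 2 / 4 - cos β ^ 2) - sin β * cos β * cos y ≤ 0 →
      sin x * (sin β ^ 2 / 4 - cos β ^ 2) - sin β * cos β * cos x ≤ 0 := by
    intro x y hx hxy hy hP
    have hsx : 0 ≤ sin x := sin_nonneg_of_nonneg_of_le_pi hx (by linarith)
    have hsxy : sin x ≤ sin y := sin_le_sin_of_le_of_le_pi_div_two (by linarith) (by linarith) hxy
    have hcxy : cos y ≤ cos x := cos_le_cos_of_nonneg_of_le_pi hx (by linarith) hxy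
    have hcx : 0 ≤ cos x := cos_nonneg_of_neg_pi_div_two_le_of_le (by linarith) (by linarith)
    have hsc : 0 ≤ sin β * cos β := by positivity
    rcases le_total (sin β ^ 2 / 4 - cos β ^ 2) 0 with hk | hk
    · nlinarith [mul_nonneg hsx (neg_nonneg.2 hk), mul_nonneg hsc hcx]
    · nlinarith [mul_le_mul_of_nonneg_right hsxy hk, mul_le_mul_of_nonneg_left hcxy hsc]
  have hw : ∀ x, 0 ≤ x → x ≤ β → 0 ≤ sin x * cos β + cos x * sin β / 2 := by
    intro x hx hx'
    have hsx : 0 ≤ sin x := sin_nonneg_of_nonneg_of_le_pi hx (by linarith)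
    have hcx : 0 ≤ cos x := cos_nonneg_of_neg_pi_div_two_le_of_le (by linarith) (by linarith)
    positivity
  have hform : ∀ x, 1 + 2 * (1 / √(1 - tcvq β x ^ 2) * (-(sin x * cos β + cos x * sin β / 2)))
      = (√(1 - tcvq β x ^ 2) - 2 * (sin x * cos β + cos x * sin β / 2)) / √(1 - tcvq β x ^ 2) := by
    intro x
    have := (tcv_sqrt_rel β x hs).1
    field_simp
    ring
  by_cases hP : sin θ * (sin β ^ 2 / 4 - cos β ^ 2) - sin β * cos β * cos θ ≤ 0
  · left
    have : AntitoneOn (fun θ => θ + 2 * arcsin (tcvq β θ)) (Set.Icc 0 θ) := by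
      apply antitoneOn_of_deriv_nonpos (convex_Icc _ _) hcont.continuousOn
      · intro x hx
        exact (hdiff x).differentiableAt.differentiableWithinAt
      · intro x hx
        rw [interior_Icc] at hx
        rw [(hdiff x).deriv, hform]
        obtain ⟨r1, r2⟩ := tcv_sqrt_rel β x hs
        have hPx := hmono x θ hx.1.le hx.2.le h1 hP
        have hsx : 0 ≤ sin x := sin_nonneg_of_nonneg_of_le_pi hx.1.le (by linarith [hx.2])
        apply div_nonpos_of_nonpos_of_nonneg _ r1.le
        have := hw x hx.1.le (by linarith [hx.2])
        have : √(1 - tcvq β x ^ 2) ≤ 2 * (sin x * cos β + cos x * sin β / 2) := by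
          refine (sq_le_sq₀ r1.le (by linarith)).1 ?_
          nlinarith [mul_nonneg hsx (neg_nonneg.2 hPx)]
        linarith
    exact this ⟨le_rfl, h0⟩ ⟨h0, le_rfl⟩ h0
  · right
    have : MonotoneOn (fun θ => θ + 2 * arcsin (tcvq β θ)) (Set.Icc θ β) := by
      apply monotoneOn_of_deriv_nonneg (convex_Icc _ _) hcont.continuousOn
      · intro x hx
        exact (hdiff x).differentiableAt.differentiableWithinAt
      · intro x hx
        rw [interior_Icc] at hx
        rw [(hdiff x).deriv, hform]
        obtain ⟨r1, r2⟩ := tcv_sqrt_rel β x hs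
        have hPx : 0 ≤ sin x * (sin β ^ 2 / 4 - cos β ^ 2) - sin β * cos β * cos x := by
          by_contra hcon
          exact hP (hmono θ x h0 hx.1.le hx.2.le (by linarith))
        have hsx : 0 ≤ sin x := sin_nonneg_of_nonneg_of_le_pi (by linarith [hx.1]) (by linarith [hx.2])
        apply div_nonneg _ r1.le
        have : 2 * (sin x * cos β + cos x * sin β / 2) ≤ √(1 - tcvq β x ^ 2) := by
          have := hw x (by linarith [hx.1]) hx.2.le
          refine (sq_le_sq₀ (by linarith) r1.le).1 ?_
          nlinarith [mul_nonneg hsx hPx]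
        linarith
    exact this ⟨le_rfl, h1⟩ ⟨h1, le_rfl⟩ h1

lemma tcv_arcsin_cos (x : ℝ) (h0 : 0 ≤ x) (h1 : x ≤ π) : arcsin (cos x) = π / 2 - x := by
  rw [arcsin_eq_pi_div_two_sub_arccos, arccos_cos h0 h1]

lemma tcv_double (β : ℝ) : cos β * cos β - sin β * sin β / 2
    = 1 - 2 * (√3 / 2 * sin β) ^ 2 := by
  have e2 := sin_sq_add_cos_sq β
  have h3 : √3 ^ 2 = 3 := Real.sq_sqrt (by norm_num)
  linear_combination e2 + (1 / 2 * sin β ^ 2) * h3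

/-- Value at a vertex. -/
lemma tcv_vertex (β : ℝ) (hβ : 0 ≤ β) (hβ' : β ≤ π / 2) :
    arcsin (tcvq β β) = π / 2 - 2 * arcsin (√3 / 2 * sin β) := by
  have hs : 0 ≤ sin β := sin_nonneg_of_nonneg_of_le_pi hβ (by linarith)
  have h3 : √3 ≤ 2 := by rw [Real.sqrt_le_left] <;> norm_num
  have hx0 : 0 ≤ √3 / 2 * sin β := by positivity
  have hx1 : √3 / 2 * sin β ≤ 1 := by nlinarith [sin_le_one β, Real.sqrt_nonneg 3]
  have ha := arcsin_nonneg.2 hx0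
  have hb := arcsin_le_pi_div_two (√3 / 2 * sin β)
  rw [tcvq, tcv_double]
  rw [← tcv_arcsin_cos _ (by linarith) (by linarith), cos_two_mul, cos_sq',
    sin_arcsin (by linarith) hx1]
  ring_nf

lemma tcv_phase (β θ : ℝ) (hβ : 0 ≤ β) (hβ' : β ≤ π / 2) (h0 : 0 ≤ θ) (h1 : θ ≤ π / 2) :
    arcsin (cos θ * cos β + sin θ * sin β) + 2 * arcsin (tcvq β θ) ≤ 3 * (π / 2 - β) ∨
    arcsin (cos θ * cos β + sin θ * sin β) + 2 * arcsin (tcvq β θ) ≤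
      3 * π / 2 - 4 * arcsin (√3 / 2 * sin β) := by
  have hpi := Real.pi_pos
  have hv := tcv_vertex β hβ hβ'
  have hs : 0 ≤ sin β := sin_nonneg_of_nonneg_of_le_pi hβ (by linarith)
  have hc : 0 ≤ cos β := cos_nonneg_of_neg_pi_div_two_le_of_le (by linarith) hβ'
  rcases le_total θ β with h | h
  · rcases hβ.eq_or_lt with rfl | hβ0
    · have : θ = 0 := le_antisymm h h0
      subst this
      left
      simp [tcvq]
      linarith
    have e : arcsin (cos θ * cos β + sin θ * sin β) = π / 2 - (β - θ) := by
      rw [← tcv_arcsin_cos _ (by linarith) (by linarith), cos_sub]; congr 1; ring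
    have e0 : arcsin (tcvq β 0) = π / 2 - β := by
      rw [← tcv_arcsin_cos _ (by linarith) (by linarith)]; simp [tcvq]
    rw [e]
    rcases tcv_phase1 β θ hβ0 hβ' h0 h with h' | h'
    · left; rw [e0] at h'; linarith
    · right; rw [hv] at h'; linarith
  · right
    have m1 := arcsin_le_pi_div_two (cos θ * cos β + sin θ * sin β)
    have m2 : arcsin (tcvq β θ) ≤ arcsin (tcvq β β) := by
      apply monotone_arcsin
      have a1 : sin β ≤ sin θ := sin_le_sin_of_le_of_le_pi_div_two (by linarith) (by linarith) h
      have a2 : cos θ ≤ cos β := cos_le_cos_of_nonneg_of_le_pi hβ (by linarith) h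
      unfold tcvq
      nlinarith [mul_le_mul_of_nonneg_right a1 hs, mul_le_mul_of_nonneg_right a2 hc]
    rw [hv] at m2
    linarith

/-- Sign comparison. -/
lemma tcv_sign (R₀ : ℝ) (hR₀ : R₀ ∈ Set.Ioo 0 (π / 2))
    (hR₀uniq : ∀ x ∈ Set.Ioo 0 (π / 2),
      3 * x = 4 * Real.arcsin (Real.sqrt 3 / 2 * Real.sin x) → x = R₀)
    (β : ℝ) (hβ : 0 ≤ β) (hβ' : β ≤ π / 2) :
    (β ≤ R₀ → 3 * β ≤ 4 * arcsin (√3 / 2 * sin β)) ∧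
    (R₀ ≤ β → 4 * arcsin (√3 / 2 * sin β) ≤ 3 * β) := by
  have hpi := Real.pi_pos
  have h3 : √3 * √3 = 3 := Real.mul_self_sqrt (by norm_num)
  set κ : ℝ → ℝ := fun x => 4 * arcsin (√3 / 2 * sin x) - 3 * x with hκ
  have hcont : Continuous κ := by
    simp only [hκ]; fun_prop
  have huniq : ∀ x ∈ Set.Ioo 0 (π / 2), κ x = 0 → x = R₀ := fun x hx h =>
    hR₀uniq x hx (by simp only [hκ] at h; linarith)
  have k2 : κ (π / 2) < 0 := by
    have : arcsin (√3 / 2) = π / 3 := by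
      rw [← sin_pi_div_three, arcsin_sin (by linarith) (by linarith)]
    simp only [hκ, sin_pi_div_two, mul_one, this]
    linarith
  have k3 : 0 < κ (π / 3) := by
    have : π / 4 < arcsin (√3 / 2 * sin (π / 3)) := by
      rw [sin_pi_div_three, show √3 / 2 * (√3 / 2) = 3 / 4 by linarith,
        ← arcsin_sin (x := π / 4) (by linarith) (by linarith), sin_pi_div_four]
      have h2 : √2 * √2 = 2 := Real.mul_self_sqrt (by norm_num)
      apply strictMonoOn_arcsin
      · constructor <;> nlinarith [Real.sqrt_nonneg 2]
      · constructor <;> norm_num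
      · nlinarith [Real.sqrt_nonneg 2]
    simp only [hκ]
    linarith
  have hR3 : π / 3 < R₀ := by
    obtain ⟨x, hx, hx0⟩ := intermediate_value_Icc' (by linarith : π / 3 ≤ π / 2) hcont.continuousOn
      (show (0 : ℝ) ∈ Set.Icc _ _ from ⟨k2.le, k3.le⟩)
    have hx2 : x ≠ π / 2 := by rintro rfl; linarith
    have hx3 : x ≠ π / 3 := by rintro rfl; linarith
    have := huniq x ⟨by linarith [hx.1], lt_of_le_of_ne hx.2 hx2⟩ hx0
    rw [← this]
    exact lt_of_le_of_ne hx.1 hx3.symm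
  constructor
  · intro h
    rcases hβ.eq_or_lt with rfl | hβ0
    · simp
    by_contra hcon
    have hk : κ β < 0 := by simp only [hκ]; linarith
    obtain ⟨x, hx, hx0⟩ := intermediate_value_uIcc (a := β) (b := π / 3) hcont.continuousOn
      (show (0 : ℝ) ∈ Set.uIcc _ _ from Set.mem_uIcc.2 (Or.inl ⟨hk.le, k3.le⟩))
    have hxβ : x ≠ β := by rintro rfl; linarith
    rcases Set.mem_uIcc.1 hx with hx | hx
    · have := huniq x ⟨by linarith [hx.1], by linarith [hx.2]⟩ hx0
      linarith [hx.2]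
    · have hlt := lt_of_le_of_ne hx.2 hxβ
      have := huniq x ⟨by linarith [hx.1], by linarith⟩ hx0
      linarith
  · intro h
    by_contra hcon
    have hk : 0 < κ β := by simp only [hκ]; linarith
    obtain ⟨x, hx, hx0⟩ := intermediate_value_Icc' hβ' hcont.continuousOn
      (show (0 : ℝ) ∈ Set.Icc _ _ from ⟨k2.le, hk.le⟩)
    have hx2 : x ≠ π / 2 := by rintro rfl; linarith
    have hxβ : x ≠ β := by rintro rfl; linarith
    have hlt := lt_of_le_of_ne hx.1 hxβ.symm
    have := huniq x ⟨by linarith, lt_of_le_of_ne hx.2 hx2⟩ hx0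
    linarith

/-- Coordinates of a unit vector in an orthonormal frame. -/
lemma tcv_coords (N u v e : EuclideanSpace ℝ (Fin 3))
    (hN : ‖N‖ = 1) (hu : ‖u‖ = 1) (hv : ‖v‖ = 1)
    (hNu : ⟪N, u⟫ = 0) (hNv : ⟪N, v⟫ = 0) (huv : ⟪u, v⟫ = 0) (he : ‖e‖ = 1) :
    ⟪N, e⟫ ^ 2 + ⟪u, e⟫ ^ 2 + ⟪v, e⟫ ^ 2 = 1 := by
  have ho : Orthonormal ℝ ![N, u, v] := by
    constructor
    · intro i; fin_cases i <;> simp [hN, hu, hv]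
    · intro i j hij
      fin_cases i <;> fin_cases j <;>
        simp_all [real_inner_comm]
  have hcard : Fintype.card (Fin 3) = Module.finrank ℝ (EuclideanSpace ℝ (Fin 3)) := by simp
  let b := (basisOfOrthonormalOfCardEqFinrank ho hcard).toOrthonormalBasis (by simpa using ho)
  have hb := b.sum_sq_norm_inner_right e
  have hbi : ∀ i, b i = ![N, u, v] i := by intro i; simp [b]
  simp only [hbi, Fin.sum_univ_three, he, Real.norm_eq_abs, sq_abs] at hb
  simpa using hb

/-- Upper bound in coordinates, upper hemisphere. -/
lemma tcv_bound_pos (β c a b : ℝ) (hβ : 0 ≤ β) (hβ' : β ≤ π / 2) (hc : 0 ≤ c)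
    (h : c ^ 2 + a ^ 2 + b ^ 2 = 1) :
    arcsin (cos β * c + sin β * a) + arcsin (cos β * c + sin β * (-a / 2 + √3 / 2 * b))
      + arcsin (cos β * c + sin β * (-a / 2 - √3 / 2 * b)) ≤
      max (3 * (π / 2 - β)) (3 * π / 2 - 4 * arcsin (√3 / 2 * sin β)) := by
  have hpi := Real.pi_pos
  have hc1 : c ≤ 1 := by nlinarith [sq_nonneg a, sq_nonneg b]
  set θ := arccos c with hθ
  have h0 : 0 ≤ θ := arccos_nonneg c
  have h1 : θ ≤ π / 2 := arccos_le_pi_div_two.2 hc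
  have hcos : cos θ = c := cos_arccos (by linarith) hc1
  have hsin0 : 0 ≤ sin θ := sin_nonneg_of_nonneg_of_le_pi h0 (by linarith)
  have hsin : sin θ ^ 2 = a ^ 2 + b ^ 2 := by
    have := sin_sq_add_cos_sq θ
    rw [hcos] at this; linarith
  have hs : 0 ≤ sin β := sin_nonneg_of_nonneg_of_le_pi hβ (by linarith)
  have hcb : 0 ≤ cos β := cos_nonneg_of_neg_pi_div_two_le_of_le (by linarith) hβ'
  obtain ⟨φ, ha, hb⟩ : ∃ φ, a = sin θ * cos φ ∧ b = sin θ * sin φ := by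
    have hn : ‖(⟨a, b⟩ : ℂ)‖ = sin θ := by
      rw [Complex.norm_eq_sqrt_sq_add_sq]
      rw [← hsin, Real.sqrt_sq hsin0]
    refine ⟨Complex.arg ⟨a, b⟩, ?_, ?_⟩
    · rw [← hn, Complex.norm_mul_cos_arg]
    · rw [← hn, Complex.norm_mul_sin_arg]
  have hAB : cos θ * cos β + sin θ * sin β ≤ 1 := by
    rw [← cos_sub]; exact cos_le_one _
  have key := tcvH_le (cos θ * cos β) (sin θ * sin β) φ (by rw [hcos]; positivity)
    (by positivity) hAB
  have E : arcsin (cos β * c + sin β * a) + arcsin (cos β * c + sin β * (-a / 2 + √3 / 2 * b))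
      + arcsin (cos β * c + sin β * (-a / 2 - √3 / 2 * b))
      = tcvH (cos θ * cos β) (sin θ * sin β) φ := by
    unfold tcvH
    rw [cos_add, cos_sub, tcv_cos23, tcv_sin23, ha, hb, hcos]
    ring_nf
  have E0 : tcvH (cos θ * cos β) (sin θ * sin β) 0 =
      arcsin (cos θ * cos β + sin θ * sin β) + 2 * arcsin (tcvq β θ) := by
    unfold tcvH tcvq
    rw [zero_add, zero_sub, cos_neg, tcv_cos23, cos_zero]
    ring_nf
  rw [E]
  refine key.trans ?_
  rw [E0]
  rcases tcv_phase β θ hβ hβ' h0 h1 with h | h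
  · exact h.trans (le_max_left _ _)
  · exact h.trans (le_max_right _ _)

lemma tcv_bound (β c a b : ℝ) (hβ : 0 ≤ β) (hβ' : β ≤ π / 2)
    (h : c ^ 2 + a ^ 2 + b ^ 2 = 1) :
    arcsin (cos β * c + sin β * a) + arcsin (cos β * c + sin β * (-a / 2 + √3 / 2 * b))
      + arcsin (cos β * c + sin β * (-a / 2 - √3 / 2 * b)) ≤
      max (3 * (π / 2 - β)) (3 * π / 2 - 4 * arcsin (√3 / 2 * sin β)) := by
  have hcb : 0 ≤ cos β := cos_nonneg_of_neg_pi_div_two_le_of_le (by linarith [pi_pos]) hβ'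
  have := tcv_bound_pos β |c| a b hβ hβ' (abs_nonneg c) (by rw [sq_abs]; exact h)
  refine le_trans ?_ this
  have hm : cos β * c ≤ cos β * |c| := mul_le_mul_of_nonneg_left (le_abs_self c) hcb
  gcongr

/-- For three unit vectors `T₁, T₂, T₃` forming an equilateral spherical triangle
with circumcenter `N` and circumradius `β ∈ [0, π/2]`:
`tc = 3(π/2 − β)` if `β ≤ R₀`, and `tc = 3π/2 − 4 arcsin((√3/2) sin β)` if
`β ≥ R₀`, where `R₀` is the unique value in `(0, π/2)` with
`3R₀ = 4 arcsin((√3/2) sin R₀)`. -/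
theorem tcVertex3_equilateral (N u v : EuclideanSpace ℝ (Fin 3))
    (hN : ‖N‖ = 1) (hu : ‖u‖ = 1) (hv : ‖v‖ = 1)
    (hNu : ⟪N, u⟫ = 0) (hNv : ⟪N, v⟫ = 0) (huv : ⟪u, v⟫ = 0)
    (β : ℝ) (hβ : 0 ≤ β) (hβ' : β ≤ π / 2)
    (T : Fin 3 → EuclideanSpace ℝ (Fin 3))
    (hT : ∀ ℓ : Fin 3, T ℓ = Real.cos β • N +
      (Real.sin β * Real.cos (2 * π * ℓ / 3)) • u +
      (Real.sin β * Real.sin (2 * π * ℓ / 3)) • v)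
    (R₀ : ℝ) (hR₀ : R₀ ∈ Set.Ioo 0 (π / 2))
    (hR₀eq : 3 * R₀ = 4 * Real.arcsin (Real.sqrt 3 / 2 * Real.sin R₀))
    (hR₀uniq : ∀ x ∈ Set.Ioo 0 (π / 2),
      3 * x = 4 * Real.arcsin (Real.sqrt 3 / 2 * Real.sin x) → x = R₀) :
    (β ≤ R₀ → tcVertex3 T = 3 * (π / 2 - β)) ∧
    (R₀ ≤ β → tcVertex3 T = 3 * π / 2 - 4 * Real.arcsin (Real.sqrt 3 / 2 * Real.sin β)) := by
  have hpi := Real.pi_pos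
  have c43 : cos (2 * π * 2 / 3) = -1 / 2 := by
    rw [show 2 * π * 2 / 3 = 2 * π - 2 * π / 3 by ring, cos_two_pi_sub, tcv_cos23]
  have s43 : sin (2 * π * 2 / 3) = -(√3 / 2) := by
    rw [show 2 * π * 2 / 3 = 2 * π - 2 * π / 3 by ring, sin_two_pi_sub, tcv_sin23]
  have T0 : T 0 = cos β • N + sin β • u := by
    rw [hT 0]; simp
  have T1 : T 1 = cos β • N + (sin β * (-1 / 2)) • u + (sin β * (√3 / 2)) • v := by
    rw [hT 1]; simp [tcv_cos23, tcv_sin23]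
  have T2 : T 2 = cos β • N + (sin β * (-1 / 2)) • u + (sin β * (-(√3 / 2))) • v := by
    rw [hT 2]
    rw [show ((2 : Fin 3) : ℕ) = 2 from rfl, Nat.cast_ofNat, c43, s43]
  have hsum : ∀ e : EuclideanSpace ℝ (Fin 3), ∑ ℓ, (π / 2 - Real.arccos ⟪T ℓ, e⟫) =
      arcsin (cos β * ⟪N, e⟫ + sin β * ⟪u, e⟫)
      + arcsin (cos β * ⟪N, e⟫ + sin β * (-⟪u, e⟫ / 2 + √3 / 2 * ⟪v, e⟫))
      + arcsin (cos β * ⟪N, e⟫ + sin β * (-⟪u, e⟫ / 2 - √3 / 2 * ⟪v, e⟫)) := by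
    intro e
    simp only [← arcsin_eq_pi_div_two_sub_arccos, Fin.sum_univ_three, T0, T1, T2, inner_add_left,
      real_inner_smul_left]
    ring_nf
  have hNN : ⟪N, N⟫ = 1 := by rw [real_inner_self_eq_norm_sq, hN]; norm_num
  have huu : ⟪u, u⟫ = 1 := by rw [real_inner_self_eq_norm_sq, hu]; norm_num
  have huN : ⟪u, N⟫ = 0 := by rw [real_inner_comm]; exact hNu
  have hvN : ⟪v, N⟫ = 0 := by rw [real_inner_comm]; exact hNv
  have hvu : ⟪v, u⟫ = 0 := by rw [real_inner_comm]; exact huv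
  have hub : ∀ s ∈ {s : ℝ | ∃ e : EuclideanSpace ℝ (Fin 3), ‖e‖ = 1 ∧
      s = ∑ ℓ, (π / 2 - Real.arccos ⟪T ℓ, e⟫)},
      s ≤ max (3 * (π / 2 - β)) (3 * π / 2 - 4 * arcsin (√3 / 2 * sin β)) := by
    rintro s ⟨e, he, rfl⟩
    rw [hsum]
    exact tcv_bound β _ _ _ hβ hβ' (tcv_coords N u v e hN hu hv hNu hNv huv he)
  obtain ⟨sg1, sg2⟩ := tcv_sign R₀ hR₀ hR₀uniq β hβ hβ'
  constructor
  · intro h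
    apply IsGreatest.csSup_eq
    refine ⟨⟨N, hN, ?_⟩, ?_⟩
    · rw [hsum, hNN, huN, hvN]
      have := tcv_arcsin_cos β hβ (by linarith)
      simp [this]
      ring
    · intro s hs
      have := hub s hs
      rwa [max_eq_left (by linarith [sg1 h])] at this
  · intro h
    apply IsGreatest.csSup_eq
    refine ⟨⟨T 0, ?_, ?_⟩, ?_⟩
    · rw [← sq_eq_sq₀ (norm_nonneg _) zero_le_one, ← real_inner_self_eq_norm_sq, T0]
      simp only [inner_add_left, inner_add_right, real_inner_smul_left, real_inner_smul_right,
        hNN, huu, huN, hNu]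
      linear_combination sin_sq_add_cos_sq β
    · have hv' := tcv_vertex β hβ hβ'
      have t1 : ⟪N, T 0⟫ = cos β := by
        rw [T0]; simp only [inner_add_right, real_inner_smul_right, hNN, hNu]; ring
      have t2 : ⟪u, T 0⟫ = sin β := by
        rw [T0]; simp only [inner_add_right, real_inner_smul_right, huN, huu]; ring
      have t3 : ⟪v, T 0⟫ = 0 := by
        rw [T0]; simp only [inner_add_right, real_inner_smul_right, hvN, hvu]; ring
      rw [hsum, t1, t2, t3]
      have a0 : cos β * cos β + sin β * sin β = 1 := by linear_combination sin_sq_add_cos_sq β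
      have a1 : cos β * cos β + sin β * (-sin β / 2 + √3 / 2 * 0) = tcvq β β := by
        unfold tcvq; ring
      have a2 : cos β * cos β + sin β * (-sin β / 2 - √3 / 2 * 0) = tcvq β β := by
        unfold tcvq; ring
      rw [a0, a1, a2, hv', arcsin_one]
      ring
    · intro s hs
      have := hub s hs
      rwa [max_eq_right (by linarith [sg2 h])] at this
end

section
/- Let Γ ⊂ ℝ³ be an embedded graph with exactly two vertices q⁺, q⁻ and three edges a₁, a₂, a₃, each a C² arc joining q⁺ to q⁻ (C¹ up to endpoints). Then the total curvature tc(Γ) := Σℓ ∫_{aℓ}|k⃗| ds + tc(q⁺) + tc(q⁻) satisfies tc(Γ) ≥ 3π, where tc(q^±) := sup_{e∈S²} Σℓ (π/2 − β_ℓ^±(e)) and β_ℓ^±(e) is the angle between e and the unit tangent vector of aℓ at q^± (pointing into aℓ). -/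
open Real RealInnerProductSpace intervalIntegral

open InnerProductGeometry Filter Topology in
lemma angle_chord {E : Type*} [NormedAddCommGroup E] [InnerProductSpace ℝ E] (x y : E)
    (hx : ‖x‖ = 1) (hy : ‖y‖ = 1) : angle x y = 2 * Real.arcsin (‖y - x‖ / 2) := by
  have h1 : Real.sin (angle x y / 2) = ‖y - x‖ / 2 := by
    have h := norm_sub_sq_real y x
    have hc : Real.cos (angle x y) = ⟪y, x⟫ := by
      rw [cos_angle, hx, hy, real_inner_comm]; simp
    have h2 : Real.cos (angle x y) = 1 - 2 * Real.sin (angle x y / 2) ^ 2 := by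
      have := Real.cos_two_mul (angle x y / 2)
      have h3 := Real.sin_sq_add_cos_sq (angle x y / 2)
      rw [mul_div_cancel₀ _ (two_ne_zero)] at this
      linarith
    have h4 : 0 ≤ Real.sin (angle x y / 2) :=
      Real.sin_nonneg_of_nonneg_of_le_pi (by linarith [angle_nonneg x y])
        (by linarith [angle_le_pi x y, angle_nonneg x y])
    have h5 : 0 ≤ ‖y - x‖ / 2 := by positivity
    rw [hx, hy] at h
    refine (sq_eq_sq₀ h4 h5).1 ?_
    nlinarith
  rw [← h1, Real.arcsin_sin] <;> linarith [angle_nonneg x y, angle_le_pi x y, Real.pi_pos]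

open InnerProductGeometry Filter Topology in
lemma angle_le_integral {E : Type*} [NormedAddCommGroup E] [InnerProductSpace ℝ E]
    (T T' : ℝ → E) (hT : ∀ t, HasDerivAt T (T' t) t) (hc : Continuous T')
    (hu : ∀ t, ‖T t‖ = 1) (a b : ℝ) (hab : a ≤ b) :
    angle (T a) (T b) ≤ ∫ t in a..b, ‖T' t‖ := by
  have hTc : Continuous T := continuous_iff_continuousAt.2 fun t => (hT t).continuousAt
  have hne : ∀ t, T t ≠ 0 := fun t h => by have := hu t; rw [h] at this; simp at this
  have key := image_le_of_liminf_slope_right_le_deriv_boundary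
    (f := fun t => angle (T a) (T t)) (a := a) (b := b)
    (B := fun t => ∫ s in a..t, ‖T' s‖) (B' := fun t => ‖T' t‖) ?_ ?_ ?_ ?_ ?_
  · exact key ⟨hab, le_refl b⟩
  · simp only [angle, hu]
    exact (Real.continuous_arccos.comp (by fun_prop)).continuousOn
  · simp [angle_self (hne a)]
  · exact (continuous_primitive (fun _ _ => hc.norm.intervalIntegrable _ _) a).continuousOn
  · intro x _
    exact (integral_hasDerivAt_right (hc.norm.intervalIntegrable _ _)
      (hc.norm.stronglyMeasurableAtFilter _ _) hc.norm.continuousAt).hasDerivWithinAt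
  · intro x _ r hr
    refine Eventually.frequently ?_
    obtain ⟨r', hr1, hr2⟩ := exists_between hr
    have hr0 : 0 < r' := lt_of_le_of_lt (norm_nonneg _) hr1
    have e1 := ((hT x).hasDerivWithinAt (s := Set.Ioi x)).limsup_norm_slope_le hr1
    have hd : HasDerivAt (fun c : ℝ => 2 * Real.arcsin (c / 2)) 1 0 := by
      have h := (Real.hasDerivAt_arcsin (x := 0 / 2) (by norm_num) (by norm_num)).comp (0:ℝ)
        ((hasDerivAt_id (0:ℝ)).div_const 2)
      have h := h.const_mul 2
      have hv : (2 * (1 / √(1 - (0 / 2) ^ 2) * (1 / 2)) : ℝ) = 1 := by norm_num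
      rw [hv] at h
      exact h
    have hε : 0 < r / r' - 1 := by
      rw [sub_pos, one_lt_div hr0]; exact hr2
    have e2 := (hasDerivAt_iff_isLittleO.1 hd).bound hε
    have ht : Tendsto (fun z => ‖T z - T x‖) (𝓝[>] x) (𝓝 0) := by
      have : Continuous fun z => ‖T z - T x‖ := by fun_prop
      have h := this.tendsto x
      simp only [sub_self, norm_zero] at h
      exact h.mono_left nhdsWithin_le_nhds
    filter_upwards [e1, ht.eventually e2, self_mem_nhdsWithin] with z h1 h2 h3
    have hz : 0 < z - x := sub_pos.2 h3
    rw [← angle_chord _ _ (hu x) (hu z)] at h2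
    simp only [zero_div, Real.arcsin_zero, mul_zero, sub_zero, smul_eq_mul, mul_one,
      Real.norm_eq_abs] at h2
    rw [Real.norm_of_nonneg hz.le, inv_mul_lt_iff₀ hz] at h1
    have h4 := (abs_le.1 h2).2
    have h5 := angle_le_angle_add_angle (T a) (T x) (T z)
    rw [abs_of_nonneg (norm_nonneg _)] at h4
    rw [slope_def_field, div_lt_iff₀ hz]
    calc _ ≤ angle (T x) (T z) := by linarith
      _ ≤ r / r' * ‖T z - T x‖ := by linarith
      _ < r / r' * ((z - x) * r') :=
        mul_lt_mul_of_pos_left h1 (by linarith)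
      _ = r * (z - x) := by field_simp

open InnerProductGeometry in
lemma inner_pos_of_angles {E : Type*} [NormedAddCommGroup E] [InnerProductSpace ℝ E]
    (x p y : E) (hx : ‖x‖ = 1) (hp : ‖p‖ = 1) (hy : ‖y‖ = 1)
    (h : angle p x + angle x y < π) : 0 < ⟪p + y, x⟫ := by
  have h1 : Real.cos (angle p x) = ⟪p, x⟫ := by rw [cos_angle, hx, hp]; simp
  have h2 : Real.cos (angle x y) = ⟪y, x⟫ := by rw [cos_angle, hx, hy, real_inner_comm]; simp
  rw [inner_add_left, ← h1, ← h2]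
  have := Real.cos_lt_cos_of_nonneg_of_le_pi (angle_nonneg p x)
    (y := π - angle x y) (by linarith [angle_nonneg x y]) (by linarith)
  rw [Real.cos_pi_sub] at this
  linarith

open InnerProductGeometry in
lemma arc_bound {E : Type*} [NormedAddCommGroup E] [InnerProductSpace ℝ E] [CompleteSpace E]
    (T T' g : ℝ → E) (hg : ∀ t, HasDerivAt g (T t) t) (hT : ∀ t, HasDerivAt T (T' t) t)
    (hc : Continuous T')
    (hu : ∀ t, ‖T t‖ = 1) (L : ℝ) (hL : 0 < L) (u : E) (hu1 : ‖u‖ = 1) (c : ℝ) (hc0 : 0 < c)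
    (hgu : g L - g 0 = c • u) :
    angle (T 0) u + angle (T L) u ≤ ∫ t in (0:ℝ)..L, ‖T' t‖ := by
  by_contra! hlt
  set K := ∫ t in (0:ℝ)..L, ‖T' t‖ with hK
  set F : ℝ → ℝ := fun s => ∫ t in (0:ℝ)..s, ‖T' t‖ with hF
  have hTc : Continuous T := continuous_iff_continuousAt.2 fun t => (hT t).continuousAt
  have hint : ∀ a b, IntervalIntegrable (fun t => ‖T' t‖) MeasureTheory.volume a b :=
    fun a b => hc.norm.intervalIntegrable a b
  have hFc : Continuous F := continuous_primitive hint 0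
  have hdiff : ∀ a b, a ≤ b → angle (T a) (T b) ≤ F b - F a := by
    intro a b hab
    rw [hF, integral_interval_sub_left (hint _ _) (hint _ _)]
    exact angle_le_integral T T' hT hc hu a b hab
  have hF0 : F 0 = 0 := by simp [hF]
  have hFL : F L = K := rfl
  have h0L := hdiff 0 L hL.le
  have t1 := angle_le_angle_add_angle (T 0) (T L) u
  have t2 := angle_le_angle_add_angle (T L) (T 0) u
  rw [angle_comm (T L) (T 0)] at t2
  obtain ⟨s, hs, hFs⟩ : (K + angle (T 0) u - angle (T L) u) / 2 ∈ F '' Set.Icc 0 L := by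
    apply intermediate_value_Icc hL.le hFc.continuousOn
    constructor <;> linarith
  have hp : ‖-u‖ = 1 := by rw [norm_neg, hu1]
  have ha : ∀ t, angle (-u) (T t) = π - angle (T t) u := fun t => by
    rw [angle_neg_left, angle_comm]
  have hpos : ∀ t ∈ Set.Icc 0 L, 0 < ⟪-u + T s, T t⟫ := by
    intro t ht
    apply inner_pos_of_angles _ _ _ (hu t) hp (hu s)
    rw [ha]
    rcases le_total t s with h | h
    · have := hdiff t s h
      have := hdiff 0 t ht.1
      have := angle_le_angle_add_angle (T 0) (T t) u
      linarith
    · have := hdiff s t h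
      have := hdiff t L ht.2
      have := angle_le_angle_add_angle (T L) (T t) u
      rw [angle_comm (T L) (T t)] at this
      rw [angle_comm (T t) (T s)]
      linarith
  have hI : ∫ t in (0:ℝ)..L, ⟪-u + T s, T t⟫ = ⟪-u + T s, g L⟫ - ⟪-u + T s, g 0⟫ := by
    apply integral_eq_sub_of_hasDerivAt
    · intro t _
      have := (hasDerivAt_const t (-u + T s)).inner ℝ (hg t)
      simpa using this
    · exact (by fun_prop : Continuous fun t => ⟪-u + T s, T t⟫).intervalIntegrable _ _
  have hIpos : 0 < ∫ t in (0:ℝ)..L, ⟪-u + T s, T t⟫ := by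
    apply intervalIntegral_pos_of_pos_on
    · exact (by fun_prop : Continuous fun t => ⟪-u + T s, T t⟫).intervalIntegrable _ _
    · exact fun t ht => hpos t ⟨ht.1.le, ht.2.le⟩
    · exact hL
  rw [hI, ← inner_sub_right, hgu, inner_smul_right, inner_add_left, inner_neg_left,
    real_inner_self_eq_norm_sq, hu1] at hIpos
  have hle := real_inner_le_norm (T s) u
  rw [hu, hu1] at hle
  nlinarith

/-- **Total curvature of a theta-graph is at least `3π`.**
Let `Γ ⊂ ℝ³` be an embedded graph with exactly two vertices `q⁺ ≠ q⁻` and three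
edges: unit-speed `C²` arcs `γℓ : [0, Lℓ] → ℝ³` from `q⁺` to `q⁻`, each injective
on `[0, Lℓ]`, with pairwise disjoint interiors.  Writing
`tc(q^±) = sup_{‖e‖=1} Σℓ (π/2 − β_ℓ^±(e))` for the vertex contributions (where
`β_ℓ^±(e)` is the angle between `e` and the tangent vector of `aℓ` at `q^±`
pointing into the arc), the total curvature satisfies
`tc(Γ) = Σℓ ∫ ‖k⃗‖ ds + tc(q⁺) + tc(q⁻) ≥ 3π`. -/
theorem theta_graph_total_curvature_ge_three_pi
    (qp qm : EuclideanSpace ℝ (Fin 3)) (hq : qp ≠ qm)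
    (L : Fin 3 → ℝ) (hL : ∀ ℓ, 0 < L ℓ)
    (γ γ' γ'' : Fin 3 → ℝ → EuclideanSpace ℝ (Fin 3))
    (hderiv : ∀ ℓ t, HasDerivAt (γ ℓ) (γ' ℓ t) t)
    (hderiv' : ∀ ℓ t, HasDerivAt (γ' ℓ) (γ'' ℓ t) t)
    (hC2 : ∀ ℓ, Continuous (γ'' ℓ))
    (hspeed : ∀ ℓ t, ‖γ' ℓ t‖ = 1)
    (h0 : ∀ ℓ, γ ℓ 0 = qp) (hend : ∀ ℓ, γ ℓ (L ℓ) = qm)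
    (hinj : ∀ ℓ, Set.InjOn (γ ℓ) (Set.Icc 0 (L ℓ)))
    (hdisj : ∀ ℓ m, ℓ ≠ m →
      Disjoint (γ ℓ '' Set.Ioo 0 (L ℓ)) (γ m '' Set.Ioo 0 (L m))) :
    3 * π ≤
      (∑ ℓ, ∫ t in (0 : ℝ)..(L ℓ), ‖γ'' ℓ t‖) +
      sSup {s : ℝ | ∃ e : EuclideanSpace ℝ (Fin 3), ‖e‖ = 1 ∧
        s = ∑ ℓ, (π / 2 - Real.arccos ⟪γ' ℓ 0, e⟫)} +
      sSup {s : ℝ | ∃ e : EuclideanSpace ℝ (Fin 3), ‖e‖ = 1 ∧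
        s = ∑ ℓ, (π / 2 - Real.arccos ⟪-γ' ℓ (L ℓ), e⟫)} := by
  set u : EuclideanSpace ℝ (Fin 3) := ‖qm - qp‖⁻¹ • (qm - qp) with hu
  have hn : 0 < ‖qm - qp‖ := norm_pos_iff.2 (sub_ne_zero.2 hq.symm)
  have hu1 : ‖u‖ = 1 := by
    rw [hu, norm_smul, norm_inv, norm_norm, inv_mul_cancel₀ hn.ne']
  have hgu : ‖qm - qp‖ • u = qm - qp := by
    rw [hu, smul_smul, mul_inv_cancel₀ hn.ne', one_smul]
  have hb : ∀ v : Fin 3 → EuclideanSpace ℝ (Fin 3), BddAbove {s : ℝ |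
      ∃ e : EuclideanSpace ℝ (Fin 3), ‖e‖ = 1 ∧ s = ∑ ℓ, (π / 2 - Real.arccos ⟪v ℓ, e⟫)} := by
    intro v
    refine ⟨∑ _ℓ : Fin 3, π / 2, ?_⟩
    rintro s ⟨e, _, rfl⟩
    exact Finset.sum_le_sum fun i _ => by linarith [Real.arccos_nonneg ⟪v i, e⟫]
  have h1 := le_csSup (hb fun ℓ => γ' ℓ 0) ⟨u, hu1, rfl⟩
  have h2 := le_csSup (hb fun ℓ => -γ' ℓ (L ℓ)) ⟨-u, by rw [norm_neg, hu1], rfl⟩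
  have harc : ∀ ℓ, Real.arccos ⟪γ' ℓ 0, u⟫ + Real.arccos ⟪-γ' ℓ (L ℓ), -u⟫
      ≤ ∫ t in (0 : ℝ)..(L ℓ), ‖γ'' ℓ t‖ := by
    intro ℓ
    have := arc_bound (γ' ℓ) (γ'' ℓ) (γ ℓ) (hderiv ℓ) (hderiv' ℓ) (hC2 ℓ) (hspeed ℓ) (L ℓ) (hL ℓ)
      u hu1 _ hn (by rw [h0, hend, hgu])
    simpa [InnerProductGeometry.angle, hspeed, hu1] using this
  have a0 := harc 0
  have a1 := harc 1
  have a2 := harc 2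
  simp only [Fin.sum_univ_three] at h1 h2 ⊢
  linarith
end
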